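/- arXiv:1109.4136 — 6 statements merged into one kernel-verified Lean document; each statement's English description precedes it below -/
import Mathlib

section
/- Assume in addition that u¹ is upper semicontinuous and u² is lower semicontinuous, and that for every ε ∈ (0,1] the function ψ_ε (defined as ψ with this value of ε, all other parameters fixed) attains its global maximum at some point (τ₀^ε, x₀^ε, y₀^ε, i₀^ε) ∈ [0,t) × ℝⁿ × ℝⁿ × I. Then ε·((|x₀^ε|² + |y₀^ε|²)/2 + 1/(t − τ₀^ε)) → 0 as ε → 0 from the right; in particular ε^{1/2}|x₀^ε| → 0 and ε^{1/2}|y₀^ε| → 0. -/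
open Set Filter Topology

/-- Abstract penalization lemma. -/
theorem penal_tendsto {Z : Type*} (D : Set Z) (F P : Z → ℝ) (C : ℝ)
    (hF : ∀ z ∈ D, F z ≤ C) (hP : ∀ z ∈ D, 0 ≤ P z) (z : ℝ → Z)
    (hz : ∀ ε ∈ Set.Ioc (0:ℝ) 1, z ε ∈ D)
    (hmax : ∀ ε ∈ Set.Ioc (0:ℝ) 1, ∀ w ∈ D, F w - ε * P w ≤ F (z ε) - ε * P (z ε)) :
    Tendsto (fun ε => ε * P (z ε)) (𝓝[Set.Ioc (0:ℝ) 1] 0) (𝓝 0) := by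
  have hne : (F '' D).Nonempty := ⟨_, z 1, hz 1 (by norm_num), rfl⟩
  have hbd : BddAbove (F '' D) := ⟨C, by rintro _ ⟨w, hw, rfl⟩; exact hF w hw⟩
  rw [Metric.tendsto_nhds]
  intro η hη
  obtain ⟨_, ⟨w, hw, rfl⟩, hlt⟩ := exists_lt_of_lt_csSup hne
    (show sSup (F '' D) - η / 2 < sSup (F '' D) by linarith)
  have hc : Tendsto (fun ε : ℝ => ε * P w) (𝓝[Set.Ioc (0:ℝ) 1] 0) (𝓝 0) := by
    have : Tendsto (fun ε : ℝ => ε * P w) (𝓝 0) (𝓝 (0 * P w)) :=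
      tendsto_id.mul_const _
    rw [zero_mul] at this
    exact this.mono_left nhdsWithin_le_nhds
  filter_upwards [hc.eventually (gt_mem_nhds (half_pos hη)), self_mem_nhdsWithin] with ε h1 hε
  have h2 := hmax ε hε w hw
  have h3 : F (z ε) ≤ sSup (F '' D) := le_csSup hbd ⟨_, hz ε hε, rfl⟩
  have h4 : 0 ≤ ε * P (z ε) := mul_nonneg hε.1.le (hP _ (hz ε hε))
  rw [Real.dist_eq, sub_zero, abs_of_nonneg h4]
  linarith

/-- Square root consequence. -/
theorem sqrt_tendsto {f g : ℝ → ℝ} (hf : ∀ ε, 0 ≤ f ε)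
    (hg : Tendsto g (𝓝[Set.Ioc (0:ℝ) 1] 0) (𝓝 0))
    (h : ∀ ε ∈ Set.Ioc (0:ℝ) 1, ε * f ε ^ 2 ≤ 2 * g ε) :
    Tendsto (fun ε => Real.sqrt ε * f ε) (𝓝[Set.Ioc (0:ℝ) 1] 0) (𝓝 0) := by
  have h1 : Tendsto (fun ε => Real.sqrt (2 * g ε)) (𝓝[Set.Ioc (0:ℝ) 1] 0) (𝓝 0) := by
    have := (hg.const_mul 2).sqrt
    simpa using this
  refine tendsto_of_tendsto_of_tendsto_of_le_of_le' tendsto_const_nhds h1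
    (Eventually.of_forall fun ε => mul_nonneg (Real.sqrt_nonneg _) (hf ε)) ?_
  filter_upwards [self_mem_nhdsWithin] with ε hε
  apply Real.le_sqrt_of_sq_le
  rw [mul_pow, Real.sq_sqrt hε.1.le]
  exact h ε hε

/-- Lemma 2-(i), refined estimate: along the maximum points of `ψ_ε`, the full
penalization `ε((|x₀^ε|² + |y₀^ε|²)/2 + 1/(t - τ₀^ε))` tends to `0` as `ε → 0⁺`;
in particular `ε^{1/2}|x₀^ε| → 0` and `ε^{1/2}|y₀^ε| → 0`. -/
theorem stmt4
    (n m : ℕ) (hn : 1 ≤ n) (hm : 1 ≤ m)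
    (T t : ℝ) (hT : 0 < T) (ht : t ∈ Set.Ioc 0 T)
    (u1 u2 : ℝ → EuclideanSpace ℝ (Fin n) → Fin m → ℝ)
    (hb1 : ∃ M, ∀ i τ x, τ ∈ Set.Icc 0 T → |u1 τ x i| ≤ M)
    (hb2 : ∃ M, ∀ i τ x, τ ∈ Set.Icc 0 T → |u2 τ x i| ≤ M)
    (husc : UpperSemicontinuousOn
      (fun p : ℝ × EuclideanSpace ℝ (Fin n) × Fin m => u1 p.1 p.2.1 p.2.2)
      {p : ℝ × EuclideanSpace ℝ (Fin n) × Fin m | p.1 ∈ Set.Icc 0 T})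
    (hlsc : LowerSemicontinuousOn
      (fun p : ℝ × EuclideanSpace ℝ (Fin n) × Fin m => u2 p.1 p.2.1 p.2.2)
      {p : ℝ × EuclideanSpace ℝ (Fin n) × Fin m | p.1 ∈ Set.Icc 0 T})
    (α γbar δ σ : ℝ) (hα : 0 < α) (hγbar : 0 ≤ γbar)
    (hδ : δ ∈ Set.Ioo (0:ℝ) 1) (hσ : 0 ≤ σ)
    (ψ : ℝ → ℝ → EuclideanSpace ℝ (Fin n) → EuclideanSpace ℝ (Fin n) → Fin m → ℝ)
    (hψ : ∀ ε τ x y i, ψ ε τ x y i =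
      u1 τ x i - u2 τ y i - δ * σ * τ / t -
        (α / 2 * Real.exp (γbar * τ) * ‖x - y‖ ^ 2
          + ε / 2 * (‖x‖ ^ 2 + ‖y‖ ^ 2) + ε / (t - τ)))
    (τ₀ : ℝ → ℝ) (x₀ y₀ : ℝ → EuclideanSpace ℝ (Fin n)) (i₀ : ℝ → Fin m)
    (hτ₀ : ∀ ε ∈ Set.Ioc (0:ℝ) 1, τ₀ ε ∈ Set.Ico 0 t)
    (hmax : ∀ ε ∈ Set.Ioc (0:ℝ) 1, ∀ τ x y i, τ ∈ Set.Ico 0 t →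
      ψ ε τ x y i ≤ ψ ε (τ₀ ε) (x₀ ε) (y₀ ε) (i₀ ε)) :
    Tendsto (fun ε => ε * ((‖x₀ ε‖ ^ 2 + ‖y₀ ε‖ ^ 2) / 2 + 1 / (t - τ₀ ε)))
        (𝓝[Set.Ioc (0:ℝ) 1] 0) (𝓝 0) ∧
      Tendsto (fun ε => Real.sqrt ε * ‖x₀ ε‖) (𝓝[Set.Ioc (0:ℝ) 1] 0) (𝓝 0) ∧
      Tendsto (fun ε => Real.sqrt ε * ‖y₀ ε‖) (𝓝[Set.Ioc (0:ℝ) 1] 0) (𝓝 0) := by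
  have hmain : Tendsto (fun ε => ε * ((‖x₀ ε‖ ^ 2 + ‖y₀ ε‖ ^ 2) / 2 + 1 / (t - τ₀ ε)))
      (𝓝[Set.Ioc (0:ℝ) 1] 0) (𝓝 0) := by
    obtain ⟨M1, hM1⟩ := hb1
    obtain ⟨M2, hM2⟩ := hb2
    refine penal_tendsto
      (Z := ℝ × EuclideanSpace ℝ (Fin n) × EuclideanSpace ℝ (Fin n) × Fin m)
      {z | z.1 ∈ Set.Ico 0 t}
      (fun z => u1 z.1 z.2.1 z.2.2.2 - u2 z.1 z.2.2.1 z.2.2.2 - δ * σ * z.1 / t -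
        α / 2 * Real.exp (γbar * z.1) * ‖z.2.1 - z.2.2.1‖ ^ 2)
      (fun z => (‖z.2.1‖ ^ 2 + ‖z.2.2.1‖ ^ 2) / 2 + 1 / (t - z.1)) (M1 + M2) ?_ ?_
      (fun ε => (τ₀ ε, x₀ ε, y₀ ε, i₀ ε)) hτ₀ ?_
    · rintro ⟨τ, x, y, i⟩ hz
      have hτ : τ ∈ Set.Ico 0 t := hz
      have hτT : τ ∈ Set.Icc 0 T := ⟨hτ.1, hτ.2.le.trans ht.2⟩
      have a1 := (abs_le.1 (hM1 i τ x hτT)).2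
      have a2 := (abs_le.1 (hM2 i τ y hτT)).1
      have a3 : 0 ≤ δ * σ * τ / t :=
        div_nonneg (mul_nonneg (mul_nonneg hδ.1.le hσ) hτ.1) ht.1.le
      have a4 : 0 ≤ α / 2 * Real.exp (γbar * τ) * ‖x - y‖ ^ 2 := by positivity
      dsimp only
      linarith
    · rintro ⟨τ, x, y, i⟩ hz
      have hτ : τ ∈ Set.Ico 0 t := hz
      have : 0 < t - τ := sub_pos.2 hτ.2
      dsimp only
      positivity
    · rintro ε hε ⟨τ, x, y, i⟩ hz
      have h := hmax ε hε τ x y i hz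
      rw [hψ, hψ] at h
      dsimp only
      have e1 : ε / (t - τ) = ε * (1 / (t - τ)) := by ring
      have e2 : ε / (t - τ₀ ε) = ε * (1 / (t - τ₀ ε)) := by ring
      rw [e1, e2] at h
      linarith
  refine ⟨hmain, sqrt_tendsto (fun ε => norm_nonneg _) hmain ?_,
    sqrt_tendsto (fun ε => norm_nonneg _) hmain ?_⟩
  all_goals
    intro ε hε
    have h0 : 0 < t - τ₀ ε := sub_pos.2 (hτ₀ ε hε).2
    have h1 : 0 ≤ ε * (1 / (t - τ₀ ε)) := mul_nonneg hε.1.le (by positivity)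
    have h2 : 0 ≤ ε * ‖x₀ ε‖ ^ 2 := mul_nonneg hε.1.le (by positivity)
    have h3 : 0 ≤ ε * ‖y₀ ε‖ ^ 2 := mul_nonneg hε.1.le (by positivity)
    linarith
end

section
/- Assume in addition that there is a function ω : [0,∞) → [0,∞) such that |u^j_i(τ,x) − u^j_i(τ,y)| ≤ ω(|x−y|) for j = 1,2 and all i ∈ I, τ ∈ [0,T], x, y ∈ ℝⁿ. Then α·e^{γ̄τ₀}|x₀ − y₀|² ≤ 2·ω(|x₀ − y₀|). -/
open Set Real

/-- Lemma 2-(i), part (ii): if `u¹` and `u²` have a common modulus of continuity `ω`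
in space, then `α e^{γ̄τ₀}|x₀ - y₀|² ≤ 2 ω(|x₀ - y₀|)`. -/
theorem stmt5
    (n m : ℕ) (hn : 1 ≤ n) (hm : 1 ≤ m)
    (T t : ℝ) (hT : 0 < T) (ht : t ∈ Set.Ioc 0 T)
    (u1 u2 : ℝ → EuclideanSpace ℝ (Fin n) → Fin m → ℝ)
    (hbdd1 : BddAbove {v : ℝ | ∃ i τ x, τ ∈ Set.Icc 0 T ∧ v = |u1 τ x i|})
    (hbdd2 : BddAbove {v : ℝ | ∃ i τ x, τ ∈ Set.Icc 0 T ∧ v = |u2 τ x i|})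
    (R : ℝ)
    (hR : R = max (sSup {v : ℝ | ∃ i τ x, τ ∈ Set.Icc 0 T ∧ v = |u1 τ x i|})
                  (sSup {v : ℝ | ∃ i τ x, τ ∈ Set.Icc 0 T ∧ v = |u2 τ x i|}))
    (α ε γbar δ σ : ℝ) (hα : 0 < α) (hε : 0 < ε) (hγbar : 0 ≤ γbar)
    (hδ : δ ∈ Set.Ioo (0:ℝ) 1) (hσ : 0 ≤ σ)
    (ψ : ℝ → EuclideanSpace ℝ (Fin n) → EuclideanSpace ℝ (Fin n) → Fin m → ℝ)
    (hψ : ∀ τ x y i, ψ τ x y i =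
      u1 τ x i - u2 τ y i - δ * σ * τ / t -
        (α / 2 * Real.exp (γbar * τ) * ‖x - y‖ ^ 2
          + ε / 2 * (‖x‖ ^ 2 + ‖y‖ ^ 2) + ε / (t - τ)))
    (τ₀ : ℝ) (x₀ y₀ : EuclideanSpace ℝ (Fin n)) (i₀ : Fin m)
    (hτ₀ : τ₀ ∈ Set.Ico 0 t)
    (hmax : ∀ τ x y i, τ ∈ Set.Ico 0 t → ψ τ x y i ≤ ψ τ₀ x₀ y₀ i₀)
    (ω : ℝ → ℝ) (hω : ∀ r, 0 ≤ r → 0 ≤ ω r)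
    (hmod1 : ∀ i τ x y, τ ∈ Set.Icc 0 T → |u1 τ x i - u1 τ y i| ≤ ω ‖x - y‖)
    (hmod2 : ∀ i τ x y, τ ∈ Set.Icc 0 T → |u2 τ x i - u2 τ y i| ≤ ω ‖x - y‖) :
    α * Real.exp (γbar * τ₀) * ‖x₀ - y₀‖ ^ 2 ≤ 2 * ω ‖x₀ - y₀‖ := by
  have hI : τ₀ ∈ Set.Icc 0 T := ⟨hτ₀.1, hτ₀.2.le.trans ht.2⟩
  have h1 := hmax τ₀ x₀ x₀ i₀ hτ₀
  have h2 := hmax τ₀ y₀ y₀ i₀ hτ₀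
  rw [hψ, hψ] at h1 h2
  have h3 := (le_abs_self _).trans (hmod1 i₀ τ₀ x₀ y₀ hI)
  have h4 := (le_abs_self _).trans (hmod2 i₀ τ₀ x₀ y₀ hI)
  simp only [sub_self, norm_zero] at h1 h2
  linarith
end

section
/- Assume in addition that ψ(τ₀,x₀,y₀,i₀) ≥ 0 and that for some constant L ≥ 0 the function x ↦ u¹_{i₀}(τ₀,x) is L-Lipschitz on ℝⁿ. Then α·e^{γ̄τ₀}|x₀ − y₀| ≤ n·(L + 2·(Rε)^{1/2}). -/
open Set Real

/-- Lemma 2-(i), part (iii): if moreover the max value is nonnegative and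
`x ↦ u¹_{i₀}(τ₀,x)` is `L`-Lipschitz, then `α e^{γ̄τ₀}|x₀ - y₀| ≤ n(L + 2√(Rε))`. -/
theorem stmt6
    (n m : ℕ) (hn : 1 ≤ n) (hm : 1 ≤ m)
    (T t : ℝ) (hT : 0 < T) (ht : t ∈ Set.Ioc 0 T)
    (u1 u2 : ℝ → EuclideanSpace ℝ (Fin n) → Fin m → ℝ)
    (hbdd1 : BddAbove {v : ℝ | ∃ i τ x, τ ∈ Set.Icc 0 T ∧ v = |u1 τ x i|})
    (hbdd2 : BddAbove {v : ℝ | ∃ i τ x, τ ∈ Set.Icc 0 T ∧ v = |u2 τ x i|})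
    (R : ℝ)
    (hR : R = max (sSup {v : ℝ | ∃ i τ x, τ ∈ Set.Icc 0 T ∧ v = |u1 τ x i|})
                  (sSup {v : ℝ | ∃ i τ x, τ ∈ Set.Icc 0 T ∧ v = |u2 τ x i|}))
    (α ε γbar δ σ : ℝ) (hα : 0 < α) (hε : 0 < ε) (hγbar : 0 ≤ γbar)
    (hδ : δ ∈ Set.Ioo (0:ℝ) 1) (hσ : 0 ≤ σ)
    (ψ : ℝ → EuclideanSpace ℝ (Fin n) → EuclideanSpace ℝ (Fin n) → Fin m → ℝ)
    (hψ : ∀ τ x y i, ψ τ x y i =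
      u1 τ x i - u2 τ y i - δ * σ * τ / t -
        (α / 2 * Real.exp (γbar * τ) * ‖x - y‖ ^ 2
          + ε / 2 * (‖x‖ ^ 2 + ‖y‖ ^ 2) + ε / (t - τ)))
    (τ₀ : ℝ) (x₀ y₀ : EuclideanSpace ℝ (Fin n)) (i₀ : Fin m)
    (hτ₀ : τ₀ ∈ Set.Ico 0 t)
    (hmax : ∀ τ x y i, τ ∈ Set.Ico 0 t → ψ τ x y i ≤ ψ τ₀ x₀ y₀ i₀)
    (hpos : 0 ≤ ψ τ₀ x₀ y₀ i₀)
    (L : ℝ) (hL : 0 ≤ L)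
    (hLip : LipschitzWith (Real.toNNReal L) (fun x => u1 τ₀ x i₀)) :
    α * Real.exp (γbar * τ₀) * ‖x₀ - y₀‖ ≤ n * (L + 2 * Real.sqrt (R * ε)) := by
  have hτT : τ₀ ∈ Set.Icc 0 T := ⟨hτ₀.1, hτ₀.2.le.trans ht.2⟩
  have h1 : |u1 τ₀ x₀ i₀| ≤ R := by
    rw [hR]
    exact (le_csSup hbdd1 ⟨i₀, τ₀, x₀, hτT, rfl⟩).trans (le_max_left _ _)
  have h2 : |u2 τ₀ y₀ i₀| ≤ R := by
    rw [hR]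
    exact (le_csSup hbdd2 ⟨i₀, τ₀, y₀, hτT, rfl⟩).trans (le_max_right _ _)
  have hR0 : 0 ≤ R := (abs_nonneg _).trans h1
  set A := α * Real.exp (γbar * τ₀) with hA
  have hA0 : 0 < A := by positivity
  set d := ‖x₀ - y₀‖ with hd
  have hd0 : 0 ≤ d := norm_nonneg _
  have hx0 : 0 ≤ ‖x₀‖ := norm_nonneg _
  have hA2 : α / 2 * Real.exp (γbar * τ₀) = A / 2 := by rw [hA]; ring
  -- bound on the norm of the maximum point
  have hK : ε * ‖x₀‖ ≤ 2 * Real.sqrt (R * ε) := by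
    have hp := hpos
    rw [hψ, hA2] at hp
    have e1 : 0 ≤ δ * σ * τ₀ / t :=
      div_nonneg (mul_nonneg (mul_nonneg hδ.1.le hσ) hτ₀.1) ht.1.le
    have e2 : 0 ≤ ε / (t - τ₀) := div_nonneg hε.le (sub_nonneg.2 hτ₀.2.le)
    have e3 : 0 ≤ A / 2 * ‖x₀ - y₀‖ ^ 2 := by positivity
    have e4 : 0 ≤ ε / 2 * ‖y₀‖ ^ 2 := by positivity
    have e5 : ε / 2 * ‖x₀‖ ^ 2 ≤ 2 * R := by
      have := (abs_le.1 h1).2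
      have := (abs_le.1 h2).1
      linarith
    have e6 : (ε * ‖x₀‖ / 2) ≤ Real.sqrt (R * ε) := by
      apply Real.le_sqrt_of_sq_le
      nlinarith
    linarith
  have key : ∀ s : ℝ, 0 < s → A * d ^ 2 ≤ (L + ε * ‖x₀‖) * d + s * ((A + ε) / 2 * d ^ 2) := by
    intro s hs
    have hm := hmax τ₀ (x₀ - s • (x₀ - y₀)) y₀ i₀ hτ₀
    rw [hψ, hψ, hA2] at hm
    have n1 : ‖x₀ - s • (x₀ - y₀) - y₀‖ ^ 2 = (1 - s) ^ 2 * d ^ 2 := by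
      have : x₀ - s • (x₀ - y₀) - y₀ = (1 - s) • (x₀ - y₀) := by module
      rw [this, norm_smul, mul_pow, Real.norm_eq_abs, sq_abs]
    have n0 : ‖s • (x₀ - y₀)‖ = s * d := by
      rw [norm_smul, Real.norm_eq_abs, abs_of_pos hs]
    have n2 : ‖x₀ - s • (x₀ - y₀)‖ ^ 2 ≤ (‖x₀‖ + s * d) ^ 2 := by
      have := norm_sub_le x₀ (s • (x₀ - y₀))
      rw [n0] at this
      gcongr
    have n3 : u1 τ₀ x₀ i₀ - u1 τ₀ (x₀ - s • (x₀ - y₀)) i₀ ≤ L * (s * d) := by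
      have := hLip.dist_le_mul x₀ (x₀ - s • (x₀ - y₀))
      rw [Real.coe_toNNReal L hL, dist_eq_norm x₀, sub_sub_cancel, n0, Real.dist_eq] at this
      exact (le_abs_self _).trans this
    rw [n1] at hm
    have n4 := mul_le_mul_of_nonneg_left n2 (half_pos hε).le
    refine le_of_mul_le_mul_left ?_ hs
    rw [← hd] at hm
    nlinarith
  have key2 : A * d ^ 2 ≤ (L + ε * ‖x₀‖) * d := by
    apply le_of_forall_pos_le_add
    intro e he
    have hC : 0 ≤ (A + ε) / 2 * d ^ 2 := by positivity
    have := key (e / ((A + ε) / 2 * d ^ 2 + 1)) (by positivity)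
    have h3 : e / ((A + ε) / 2 * d ^ 2 + 1) * ((A + ε) / 2 * d ^ 2) ≤ e := by
      rw [div_mul_eq_mul_div, div_le_iff₀ (by positivity)]
      nlinarith
    linarith
  have hn' : (1 : ℝ) ≤ n := by exact_mod_cast hn
  have hs0 := Real.sqrt_nonneg (R * ε)
  have key3 : A * d ≤ L + 2 * Real.sqrt (R * ε) := by
    rcases hd0.eq_or_lt with h | h
    · rw [← h]; linarith
    · have : A * d ≤ L + ε * ‖x₀‖ := by
        refine le_of_mul_le_mul_right ?_ h
        linarith
      linarith
  nlinarith
end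

section
/- Let ᾱ, ε ≥ 0 and let X, Y ∈ Sⁿ satisfy the block inequality D(X,Y) ≤ 3ᾱ·J + 2ε·I_{2n}. Then for all real n×n matrices A and B one has tr(AAᵀX) − tr(BBᵀY) ≤ 3ᾱ·‖A − B‖_F² + 2ε·(‖A‖_F² + ‖B‖_F²). -/
open Matrix

/-- Ishii's trace inequality: if the block matrix `D(X,Y) = [[X,0],[0,-Y]]` is
dominated by `3ᾱ J + 2ε I` with `J = [[I,-I],[-I,I]]`, then for all matrices
`A`, `B` one has
`tr(AAᵀX) - tr(BBᵀY) ≤ 3ᾱ ‖A-B‖_F² + 2ε(‖A‖_F² + ‖B‖_F²)`. -/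
theorem stmt8
    (n : ℕ) (hn : 1 ≤ n)
    (αbar ε : ℝ) (hαbar : 0 ≤ αbar) (hε : 0 ≤ ε)
    (X Y : Matrix (Fin n) (Fin n) ℝ) (hX : X.IsSymm) (hY : Y.IsSymm)
    (hXY : ((3 * αbar) • (fromBlocks (1 : Matrix (Fin n) (Fin n) ℝ) (-1) (-1) 1)
        + (2 * ε) • (1 : Matrix (Fin n ⊕ Fin n) (Fin n ⊕ Fin n) ℝ)
        - fromBlocks X 0 0 (-Y)).PosSemidef)
    (A B : Matrix (Fin n) (Fin n) ℝ) :
    trace (A * Aᵀ * X) - trace (B * Bᵀ * Y)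
      ≤ 3 * αbar * trace ((A - B) * (A - B)ᵀ)
        + 2 * ε * (trace (A * Aᵀ) + trace (B * Bᵀ)) := by
  have h := (hXY.conjTranspose_mul_mul_same (fromRows A B)).trace_nonneg
  rw [← fromBlocks_one, fromBlocks_smul, fromBlocks_smul, fromBlocks_add, sub_eq_add_neg,
    fromBlocks_neg, fromBlocks_add, conjTranspose_fromRows_eq_fromCols_conjTranspose,
    fromCols_mul_fromBlocks, fromCols_mul_fromRows] at h
  simp only [conjTranspose_eq_transpose_of_trivial, mul_add, add_mul, trace_add, Matrix.mul_smul,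
    Matrix.smul_mul, trace_smul, mul_neg, neg_mul, trace_neg, mul_one, neg_neg, neg_zero,
    mul_zero, zero_mul, smul_zero, add_zero, smul_neg, smul_eq_mul, trace_zero] at h
  have e1 : trace (A * Aᵀ * X) = trace (Aᵀ * X * A) := by
    rw [mul_assoc, trace_mul_comm]
  have e2 : trace (B * Bᵀ * Y) = trace (Bᵀ * Y * B) := by
    rw [mul_assoc, trace_mul_comm]
  have e3 : trace ((A - B) * (A - B)ᵀ)
      = trace (Aᵀ * A) - trace (Bᵀ * A) - trace (Aᵀ * B) + trace (Bᵀ * B) := by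
    rw [transpose_sub, trace_mul_comm]
    simp only [mul_sub, sub_mul, trace_sub]
    ring
  rw [e1, e2, e3, trace_mul_comm A, trace_mul_comm B]
  linarith
end

section
/- Let ᾱ, ε ≥ 0 and let X, Y ∈ Sⁿ satisfy D(X,Y) ≤ 3ᾱ·J + 2ε·I_{2n}. Then X ≤ Y + 4ε·I_n. -/
open Matrix

/-- If `D(X,Y) = [[X,0],[0,-Y]] ≤ 3ᾱ J + 2ε I` with `J = [[I,-I],[-I,I]]`,
then `X ≤ Y + 4ε I`. -/
theorem stmt11
    (n : ℕ) (hn : 1 ≤ n)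
    (αbar ε : ℝ) (hαbar : 0 ≤ αbar) (hε : 0 ≤ ε)
    (X Y : Matrix (Fin n) (Fin n) ℝ) (hX : X.IsSymm) (hY : Y.IsSymm)
    (hXY : ((3 * αbar) • (fromBlocks (1 : Matrix (Fin n) (Fin n) ℝ) (-1) (-1) 1)
        + (2 * ε) • (1 : Matrix (Fin n ⊕ Fin n) (Fin n ⊕ Fin n) ℝ)
        - fromBlocks X 0 0 (-Y)).PosSemidef) :
    (Y + (4 * ε) • (1 : Matrix (Fin n) (Fin n) ℝ) - X).PosSemidef := by
  have h := hXY.conjTranspose_mul_mul_same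
    (fromRows (1 : Matrix (Fin n) (Fin n) ℝ) (1 : Matrix (Fin n) (Fin n) ℝ))
  convert h using 1
  rw [← fromBlocks_one, fromBlocks_smul, fromBlocks_smul, fromBlocks_add, sub_eq_add_neg (fromBlocks _ _ _ _),
    fromBlocks_neg, fromBlocks_add, conjTranspose_fromRows_eq_fromCols_conjTranspose,
    fromCols_mul_fromBlocks, fromCols_mul_fromRows]
  simp only [conjTranspose_one, Matrix.one_mul, Matrix.mul_one]
  module
end

section
/- Assume σ > 0 and that ψ attains its global maximum over [0,t) × ℝⁿ × ℝⁿ × I at a point (τ₀, x₀, y₀, i₀). Then τ₀ > 0. -/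
open Set

/-- In the proof of the continuous dependence estimate: if `σ > 0`, then the
maximum point `(τ₀,x₀,y₀,i₀)` of `ψ` satisfies `τ₀ > 0`. -/
theorem stmt18
    (n m : ℕ) (hn : 1 ≤ n) (hm : 1 ≤ m)
    (T t : ℝ) (hT : 0 < T) (ht : t ∈ Set.Ioc 0 T)
    (u1 u2 : ℝ → EuclideanSpace ℝ (Fin n) → Fin m → ℝ)
    (hbdd1 : BddAbove {v : ℝ | ∃ i τ x, τ ∈ Set.Icc 0 T ∧ v = |u1 τ x i|})
    (hbdd2 : BddAbove {v : ℝ | ∃ i τ x, τ ∈ Set.Icc 0 T ∧ v = |u2 τ x i|})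
    (R : ℝ)
    (hR : R = max (sSup {v : ℝ | ∃ i τ x, τ ∈ Set.Icc 0 T ∧ v = |u1 τ x i|})
                  (sSup {v : ℝ | ∃ i τ x, τ ∈ Set.Icc 0 T ∧ v = |u2 τ x i|}))
    (α ε γbar δ : ℝ) (hα : 0 < α) (hε : 0 < ε) (hγbar : 0 ≤ γbar)
    (hδ : δ ∈ Set.Ioo (0:ℝ) 1)
    (Δ : Set (EuclideanSpace ℝ (Fin n) × EuclideanSpace ℝ (Fin n)))
    (hΔ : Δ = {p | ‖p.1 - p.2‖ ≤ 2 * Real.sqrt R / Real.sqrt α})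
    (σ₀ σ : ℝ)
    (hσ₀ : σ₀ = sSup {v : ℝ | ∃ (i : Fin m) (x y : EuclideanSpace ℝ (Fin n)),
        (x, y) ∈ Δ ∧ v = max (u1 0 x i - u2 0 y i - α / 2 * ‖x - y‖ ^ 2) 0})
    (hσdef : σ = -σ₀ + sSup {v : ℝ | ∃ (τ : ℝ) (i : Fin m)
        (x y : EuclideanSpace ℝ (Fin n)), τ ∈ Set.Ico 0 t ∧ (x, y) ∈ Δ ∧
        v = u1 τ x i - u2 τ y i -
          (α / 2 * Real.exp (γbar * τ) * ‖x - y‖ ^ 2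
            + ε / 2 * (‖x‖ ^ 2 + ‖y‖ ^ 2) + ε / (t - τ))})
    (hσpos : 0 < σ)
    (ψ : ℝ → EuclideanSpace ℝ (Fin n) → EuclideanSpace ℝ (Fin n) → Fin m → ℝ)
    (hψ : ∀ τ x y i, ψ τ x y i =
      u1 τ x i - u2 τ y i - δ * σ * τ / t -
        (α / 2 * Real.exp (γbar * τ) * ‖x - y‖ ^ 2
          + ε / 2 * (‖x‖ ^ 2 + ‖y‖ ^ 2) + ε / (t - τ)))
    (τ₀ : ℝ) (x₀ y₀ : EuclideanSpace ℝ (Fin n)) (i₀ : Fin m)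
    (hτ₀ : τ₀ ∈ Set.Ico 0 t)
    (hmax : ∀ τ x y i, τ ∈ Set.Ico 0 t → ψ τ x y i ≤ ψ τ₀ x₀ y₀ i₀) :
    0 < τ₀ := by
  obtain ⟨ht0, htT⟩ := ht
  obtain ⟨hδ0, hδ1⟩ := hδ
  have hu1 : ∀ τ x i, τ ∈ Set.Icc 0 T → |u1 τ x i| ≤ R := by
    intro τ x i h
    rw [hR]
    exact le_max_of_le_left (le_csSup hbdd1 ⟨i, τ, x, h, rfl⟩)
  have hu2 : ∀ τ x i, τ ∈ Set.Icc 0 T → |u2 τ x i| ≤ R := by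
    intro τ x i h
    rw [hR]
    exact le_max_of_le_right (le_csSup hbdd2 ⟨i, τ, x, h, rfl⟩)
  have h0T : (0:ℝ) ∈ Set.Icc 0 T := ⟨le_rfl, hT.le⟩
  have hR0 : 0 ≤ R := (abs_nonneg _).trans (hu1 0 x₀ i₀ h0T)
  have hdiff : ∀ x y i, u1 0 x i - u2 0 y i ≤ 2 * R := by
    intro x y i
    have h1 := (abs_le.mp (hu1 0 x i h0T)).2
    have h2 := (abs_le.mp (hu2 0 y i h0T)).1
    linarith
  have hσ₀0 : 0 ≤ σ₀ := by
    rw [hσ₀]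
    apply Real.sSup_nonneg
    rintro v ⟨i, x, y, -, rfl⟩
    exact le_max_right _ _
  by_contra hneg
  have hz : τ₀ = 0 := le_antisymm (not_lt.mp hneg) hτ₀.1
  subst hz
  have hsup : sSup {v : ℝ | ∃ (τ : ℝ) (i : Fin m)
        (x y : EuclideanSpace ℝ (Fin n)), τ ∈ Set.Ico 0 t ∧ (x, y) ∈ Δ ∧
        v = u1 τ x i - u2 τ y i -
          (α / 2 * Real.exp (γbar * τ) * ‖x - y‖ ^ 2
            + ε / 2 * (‖x‖ ^ 2 + ‖y‖ ^ 2) + ε / (t - τ))} ≤ ψ 0 x₀ y₀ i₀ + δ * σ := by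
    apply csSup_le
    · refine ⟨_, 0, i₀, 0, 0, hτ₀, ?_, rfl⟩
      rw [hΔ]
      simp only [Set.mem_setOf_eq, sub_self, norm_zero]
      positivity
    · rintro v ⟨τ, i, x, y, hτ, -, rfl⟩
      have h := hmax τ x y i hτ
      rw [hψ τ x y i] at h
      have h2 : δ * σ * τ / t ≤ δ * σ := by
        rw [div_le_iff₀ ht0]
        exact mul_le_mul_of_nonneg_left hτ.2.le (by positivity)
      linarith
  have hM : ψ 0 x₀ y₀ i₀ ≤ u1 0 x₀ i₀ - u2 0 y₀ i₀ - α / 2 * ‖x₀ - y₀‖ ^ 2 := by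
    rw [hψ]
    have h1 : 0 ≤ ε / 2 * (‖x₀‖ ^ 2 + ‖y₀‖ ^ 2) := by positivity
    have h2 : 0 ≤ ε / (t - 0) := by rw [sub_zero]; positivity
    simp only [mul_zero, Real.exp_zero, mul_one, zero_div]
    linarith
  have hMσ : ψ 0 x₀ y₀ i₀ ≤ σ₀ := by
    by_cases hmem : (x₀, y₀) ∈ Δ
    · refine hM.trans ((le_max_left _ 0).trans ?_)
      rw [hσ₀]
      refine le_csSup ⟨2 * R, ?_⟩ ⟨i₀, x₀, y₀, hmem, rfl⟩
      rintro v ⟨i, x, y, -, rfl⟩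
      refine max_le ?_ (by positivity)
      have h1 : 0 ≤ α / 2 * ‖x - y‖ ^ 2 := by positivity
      linarith [hdiff x y i]
    · rw [hΔ] at hmem
      simp only [Set.mem_setOf_eq, not_le] at hmem
      have hsq : (2 * Real.sqrt R / Real.sqrt α) ^ 2 ≤ ‖x₀ - y₀‖ ^ 2 :=
        pow_le_pow_left₀ (by positivity) hmem.le 2
      rw [div_pow, mul_pow, Real.sq_sqrt hR0, Real.sq_sqrt hα.le, div_le_iff₀ hα] at hsq
      linarith [hdiff x₀ y₀ i₀]
  nlinarith [mul_pos (sub_pos.mpr hδ1) hσpos]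
end
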